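/- arXiv:1704.00335 — 2 statements merged into one kernel-verified Lean document; each statement's English description precedes it below -/
import Mathlib

section
/- Let k be a field, let (L, K, M) be a field correspondence over k (so M/L and M/K are finite and separable), and let Ω be an algebraically closed field containing M. If L ∩ K has transcendence degree 1 over k (the correspondence has a core), then there exists a subfield E of Ω containing M with [E : M] finite such that E is Galois over L and E is Galois over K. -/
/-- A field extension `F/k` has transcendence degree one iff some single element
forms a transcendence basis of `F` over `k`. -/
def HasTrdegOne (k F : Type*) [Field k] [Field F] [Algebra k F] : Prop :=
  ∃ x : F, IsTranscendenceBasis k (fun _ : Unit => x)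

/-- For subfields `B ≤ E` of `Ω`, the extension `E/B` is Galois. -/
def IsGaloisOver {k Ω : Type*} [Field k] [Field Ω] [Algebra k Ω]
    (B E : IntermediateField k Ω) : Prop :=
  ∃ h : B ≤ E, IsGalois B (IntermediateField.extendScalars h)

/-- For subfields `B ≤ E` of `Ω`, the extension `E/B` is finite. -/
def IsFiniteOver {k Ω : Type*} [Field k] [Field Ω] [Algebra k Ω]
    (B E : IntermediateField k Ω) : Prop :=
  ∃ h : B ≤ E, FiniteDimensional B (IntermediateField.extendScalars h)

open Polynomial in
/-- An algebraic extension in which only the base is fixed by all automorphisms is separable. -/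
lemma isSeparable_of_fixed {F N : Type*} [Field F] [Field N] [Algebra F N]
    [Algebra.IsAlgebraic F N]
    (h : ∀ x : N, (∀ σ : N ≃ₐ[F] N, σ x = x) → x ∈ (algebraMap F N).range) :
    Algebra.IsSeparable F N := by
  classical
  refine ⟨fun x => ?_⟩
  have hx : IsIntegral F x := Algebra.IsIntegral.isIntegral x
  have hfin : (Set.range fun σ : N ≃ₐ[F] N => σ x).Finite := by
    refine ((minpoly F x).rootSet_finite N).subset ?_
    rintro _ ⟨σ, rfl⟩
    rw [mem_rootSet]
    exact ⟨minpoly.ne_zero hx, by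
      rw [aeval_algEquiv, AlgHom.comp_apply, minpoly.aeval, map_zero]⟩
  set R : Finset N := hfin.toFinset with hR
  set P : N[X] := ∏ y ∈ R, (X - C y) with hP
  have hPsep : P.Separable := by
    rw [hP, separable_prod_X_sub_C_iff']
    intro a _ b _ hab
    exact hab
  have hPmap : ∀ σ : N ≃ₐ[F] N, P.map (σ : N →+* N) = P := by
    intro σ
    rw [hP, Polynomial.map_prod]
    refine Finset.prod_bij (fun y _ => σ y) ?_ ?_ ?_ ?_
    · intro y hy
      simp only [hR, Set.Finite.mem_toFinset, Set.mem_range] at hy ⊢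
      obtain ⟨τ, rfl⟩ := hy
      exact ⟨τ.trans σ, rfl⟩
    · intro a _ b _ hab
      exact σ.injective hab
    · intro y hy
      simp only [hR, Set.Finite.mem_toFinset, Set.mem_range] at hy
      obtain ⟨τ, rfl⟩ := hy
      refine ⟨σ.symm (τ x), ?_, by simp⟩
      simp only [hR, Set.Finite.mem_toFinset, Set.mem_range]
      exact ⟨τ.trans σ.symm, rfl⟩
    · intro y _
      simp
  have hlift : P ∈ Polynomial.lifts (algebraMap F N) := by
    rw [Polynomial.lifts_iff_coeff_lifts]
    intro n
    apply h
    intro σ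
    conv_rhs => rw [← hPmap σ]
    rw [coeff_map]
    rfl
  obtain ⟨Q, hQ⟩ := (Polynomial.mem_lifts P).1 hlift
  have hQsep : Q.Separable := by
    rw [← Polynomial.separable_map (algebraMap F N), hQ]
    exact hPsep
  refine hQsep.of_dvd (minpoly.dvd F x ?_)
  rw [aeval_def, ← eval_map, hQ, hP, eval_prod]
  refine Finset.prod_eq_zero (i := x) ?_ (by simp)
  simp only [hR, Set.Finite.mem_toFinset, Set.mem_range]
  exact ⟨AlgEquiv.refl, rfl⟩

/-- Separability over the core. -/
lemma core_isSeparable {k M : Type*} [Field k] [Field M] [Algebra k M]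
    (L K : IntermediateField k M)
    [Algebra.IsSeparable L M] [Algebra.IsSeparable K M]
    [Algebra.IsAlgebraic ↥(L ⊓ K) M] : Algebra.IsSeparable ↥(L ⊓ K) M := by
  have hgal : ∀ (J : IntermediateField k M) [Algebra.IsSeparable J M],
      IsGalois J (SeparableClosure M) := by
    intro J _
    have : Algebra.IsSeparable J (SeparableClosure M) := Algebra.IsSeparable.trans J M _
    have : IsSepClosure J (SeparableClosure M) := ⟨inferInstance, this⟩
    exact IsSepClosure.isGalois
  have hL := hgal L
  have hK := hgal K
  have : Algebra.IsAlgebraic ↥(L ⊓ K) (SeparableClosure M) := Algebra.IsAlgebraic.trans _ M _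
  have hS : Algebra.IsSeparable ↥(L ⊓ K) (SeparableClosure M) := by
    apply isSeparable_of_fixed
    intro x hx
    have key : ∀ (J : IntermediateField k M) [IsGalois J (SeparableClosure M)], L ⊓ K ≤ J →
        ∃ y : J, algebraMap M (SeparableClosure M) y = x := by
      intro J _ hJ
      obtain ⟨y, hy⟩ := (InfiniteGalois.mem_range_algebraMap_iff_fixed (k := J) x).2 (by
        intro f
        exact hx { f with commutes' := fun r => f.commutes ⟨r.1, hJ r.2⟩ })
      exact ⟨y, hy⟩
    obtain ⟨y, hy⟩ := key L inf_le_left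
    obtain ⟨z, hz⟩ := key K inf_le_right
    have hyz : (y : M) = z := (algebraMap M (SeparableClosure M)).injective (hy.trans hz.symm)
    exact ⟨⟨y, y.2, hyz ▸ z.2⟩, hy⟩
  exact Algebra.isSeparable_tower_bot_of_isSeparable _ M (SeparableClosure M)

lemma finite_of_tower {F B E : Type*} [Field F] [Field B] [Field E] [inst : Algebra F E]
    [Algebra B E] (i : F →+* B) (h : ∀ x, algebraMap F E x = algebraMap B E (i x))
    (hfin : FiniteDimensional F E) : FiniteDimensional B E := by
  let _ : Algebra F B := i.toAlgebra
  have : IsScalarTower F B E := IsScalarTower.of_algebraMap_eq h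
  exact FiniteDimensional.right F B E

universe u in
lemma isAlgebraic_of_trdeg_one {k : Type*} {F M : Type u} [Field k] [Field F] [Field M]
    [Algebra k F] [Algebra k M] [Algebra F M] [IsScalarTower k F M] {x : F} {t : M}
    (hx : IsTranscendenceBasis k (fun _ : Unit => x))
    (ht : IsTranscendenceBasis k (fun _ : Unit => t)) : Algebra.IsAlgebraic F M := by
  have h1 := hx.lift_cardinalMk_eq_trdeg
  have h2 := ht.lift_cardinalMk_eq_trdeg
  simp only [Cardinal.mk_fintype, Fintype.card_unit, Nat.cast_one, Cardinal.lift_one,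
    Cardinal.lift_id'] at h1 h2
  have h3 := trdeg_add_le (R := k) (S := F) (A := M)
  rw [← h1, ← h2] at h3
  rw [← trdeg_eq_zero_iff]
  have h4 : Algebra.trdeg F M < Cardinal.aleph0 :=
    lt_of_le_of_lt (le_trans (self_le_add_left _ _) h3) Cardinal.one_lt_aleph0
  obtain ⟨n, hn⟩ := Cardinal.lt_aleph0.1 h4
  rw [hn] at h3 ⊢
  norm_cast at h3 ⊢
  omega

/-- converse direction of Lemma `No_Galois`.
If the field correspondence `L ⊆ M ⊇ K` over `k` has a core, then inside any algebraically
closed field `Ω ⊇ M` there is a finite extension `E` of `M` which is Galois over both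
`L` and `K`. -/
theorem exists_biGalois_extension_of_has_core
    (k M : Type*) [Field k] [Field M] [Algebra k M]
    -- `M` is a finitely generated field extension of `k` of transcendence degree 1
    (hfg : (⊤ : IntermediateField k M).FG)
    (htr : HasTrdegOne k M)
    -- the two intermediate fields `L` and `K`, with `M/L` and `M/K` finite and separable
    (L K : IntermediateField k M)
    [FiniteDimensional L M] [FiniteDimensional K M]
    [Algebra.IsSeparable L M] [Algebra.IsSeparable K M]
    -- the correspondence has a core
    (hcore : HasTrdegOne k ↥(L ⊓ K))
    -- an algebraically closed field `Ω` containing `M`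
    (Ω : Type*) [Field Ω] [Algebra k Ω] [Algebra M Ω] [IsScalarTower k M Ω]
    [IsAlgClosed Ω] :
    ∃ E : IntermediateField k Ω,
      (IsScalarTower.toAlgHom k M Ω).fieldRange ≤ E ∧
      IsFiniteOver (IsScalarTower.toAlgHom k M Ω).fieldRange E ∧
      IsGaloisOver (L.map (IsScalarTower.toAlgHom k M Ω)) E ∧
      IsGaloisOver (K.map (IsScalarTower.toAlgHom k M Ω)) E := by
  obtain ⟨x, hx⟩ := hcore
  obtain ⟨t, ht⟩ := htr
  -- `M` is algebraic over the core
  have halg : Algebra.IsAlgebraic ↥(L ⊓ K) M := 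
    isAlgebraic_of_trdeg_one hx ht
  have : Algebra.EssFiniteType k M := IntermediateField.fg_top_iff.1 hfg
  have : Algebra.EssFiniteType ↥(L ⊓ K) M := Algebra.EssFiniteType.of_comp k _ M
  have : FiniteDimensional ↥(L ⊓ K) M := Algebra.finite_of_essFiniteType_of_isAlgebraic
  have hsep := core_isSeparable L K
  -- `E0` is the normal closure of `M` over the core
  set E0 : IntermediateField ↥(L ⊓ K) Ω := IntermediateField.normalClosure ↥(L ⊓ K) M Ω with hE0
  have hME : ∀ m : M, algebraMap M Ω m ∈ E0 := fun m =>
    (IsScalarTower.toAlgHom ↥(L ⊓ K) M Ω).fieldRange_le_normalClosure ⟨m, rfl⟩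
  have hnc : IsNormalClosure ↥(L ⊓ K) M E0 :=
    Algebra.IsAlgebraic.isNormalClosure_normalClosure fun x => IsAlgClosed.splits _
  have hnorm : Normal ↥(L ⊓ K) E0 := hnc.normal
  have hEsep : Algebra.IsSeparable ↥(L ⊓ K) E0 := by
    rw [← le_separableClosure_iff, hE0, normalClosure_le_iff]
    intro f
    rw [le_separableClosure_iff]
    exact AlgEquiv.Algebra.isSeparable (AlgEquiv.ofInjectiveField f)
  have hgal : IsGalois ↥(L ⊓ K) E0 := ⟨⟩
  have hfin : FiniteDimensional ↥(L ⊓ K) E0 := normalClosure.is_finiteDimensional _ _ _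
  have hle : (IsScalarTower.toAlgHom k M Ω).fieldRange ≤ E0.restrictScalars k := by
    rintro _ ⟨m, rfl⟩
    exact hME m
  have key : ∀ J : IntermediateField k M, L ⊓ K ≤ J →
      IsGaloisOver (J.map (IsScalarTower.toAlgHom k M Ω)) (E0.restrictScalars k) := by
    intro J hJ
    have hJE : J.map (IsScalarTower.toAlgHom k M Ω) ≤ E0.restrictScalars k := by
      rintro _ ⟨m, _, rfl⟩
      exact hME m
    refine ⟨hJE, ?_⟩
    let _ : Algebra ↥(L ⊓ K) (J.map (IsScalarTower.toAlgHom k M Ω)) :=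
      (((IsScalarTower.toAlgHom k M Ω).comp (L ⊓ K).val).codRestrict
        (J.map (IsScalarTower.toAlgHom k M Ω)).toSubalgebra
        (fun y => ⟨y, hJ y.2, rfl⟩)).toRingHom.toAlgebra
    let _ : Algebra ↥(L ⊓ K) (IntermediateField.extendScalars hJE) :=
      inferInstanceAs (Algebra ↥(L ⊓ K) E0)
    have : IsScalarTower ↥(L ⊓ K) (J.map (IsScalarTower.toAlgHom k M Ω))
        (IntermediateField.extendScalars hJE) := IsScalarTower.of_algebraMap_eq fun _ => rfl
    have : IsGalois ↥(L ⊓ K) (IntermediateField.extendScalars hJE) := hgal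
    exact IsGalois.tower_top_of_isGalois ↥(L ⊓ K) _ _
  refine ⟨E0.restrictScalars k, hle, ⟨hle, ?_⟩, key L inf_le_left, key K inf_le_right⟩
  let inst : Algebra ↥(L ⊓ K) (IntermediateField.extendScalars hle) :=
    inferInstanceAs (Algebra ↥(L ⊓ K) E0)
  have hfin' : @Module.Finite ↥(L ⊓ K) (IntermediateField.extendScalars hle) _ _ inst.toModule :=
    hfin
  exact finite_of_tower (inst := inst)
    ((IsScalarTower.toAlgHom k M Ω).rangeRestrict.comp (L ⊓ K).val).toRingHom (fun _ => rfl) hfin'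
end

section
/- Let k be a field, let (L, K, M) be a field correspondence over k, let Ω be an algebraically closed field extension of k of transcendence degree 1, and fix a k-algebra embedding PQ : M → Ω with restrictions P = PQ|_L and Q = PQ|_K. Let E_∞ ⊆ Ω be the union of the alternating tower of Galois closures: E_1 the Galois closure of PQ(M) over Q(K) inside Ω, E_2 the Galois closure of E_1 over P(L) inside Ω, and so on alternately. Then E_∞ is Galois (normal and separable, possibly infinite) over P(L) and over Q(K), and for every subfield F of Ω containing PQ(M) such that F is Galois over P(L) and Galois over Q(K), one has E_∞ ⊆ F. In other words, E_∞ is the minimal subfield of Ω containing PQ(M) that is Galois over both P(L) and Q(K). -/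
/-- The Galois (= normal) closure inside `Ω` of the subfield `F` over the subfield `B`:
the compositum of the images of `F` under all `k`-algebra endomorphisms of `Ω`
fixing `B` pointwise. -/
noncomputable def galoisClosureOver {k Ω : Type*} [Field k] [Field Ω] [Algebra k Ω]
    (B F : IntermediateField k Ω) : IntermediateField k Ω :=
  ⨆ σ : {σ : Ω →ₐ[k] Ω // ∀ x ∈ B, σ x = x}, F.map σ.1

/-- The alternating tower of Galois closures: `altTower B₁ B₂ F₀ (n+1)` is the Galois
closure of `altTower B₁ B₂ F₀ n` over `B₁` (for even `n`), resp. over `B₂` (for odd `n`),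
starting from `F₀`. -/
noncomputable def altTower {k Ω : Type*} [Field k] [Field Ω] [Algebra k Ω]
    (B₁ B₂ F₀ : IntermediateField k Ω) : ℕ → IntermediateField k Ω
  | 0 => F₀
  | n + 1 => galoisClosureOver (if n % 2 = 0 then B₁ else B₂) (altTower B₁ B₂ F₀ n)

/-- The separable closure of `B` in `Ω`, as an intermediate field over `k`. -/
noncomputable def sepOver {k Ω : Type*} [Field k] [Field Ω] [Algebra k Ω]
    (B : IntermediateField k Ω) : IntermediateField k Ω :=
  (separableClosure B Ω).restrictScalars k

lemma mem_sepOver {k Ω : Type*} [Field k] [Field Ω] [Algebra k Ω]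
    (B : IntermediateField k Ω) (x : Ω) : x ∈ sepOver B ↔ IsSeparable B x := Iff.rfl

lemma isGaloisOver_iff_aux {k Ω : Type*} [Field k] [Field Ω] [Algebra k Ω] [IsAlgClosed Ω]
    (B E : IntermediateField k Ω) [Algebra.IsAlgebraic B Ω] (h : B ≤ E) :
    IsGaloisOver B E ↔ E ≤ sepOver B ∧
      ∀ σ : Ω →ₐ[k] Ω, (∀ x ∈ B, σ x = x) → E.map σ ≤ E := by
  have : IsAlgClosure B Ω := ⟨inferInstance, inferInstance⟩
  have : Normal B Ω := IsAlgClosure.normal B Ω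
  have hs : E ≤ sepOver B ↔ Algebra.IsSeparable B (IntermediateField.extendScalars h) := by
    rw [← le_separableClosure_iff]; rfl
  have hn : Normal B (IntermediateField.extendScalars h) ↔
      ∀ σ : Ω →ₐ[k] Ω, (∀ x ∈ B, σ x = x) → E.map σ ≤ E := by
    rw [IntermediateField.normal_iff_forall_map_le]
    constructor
    · intro H σ hσ
      let τ : Ω →ₐ[B] Ω := { σ.toRingHom with commutes' := fun b => hσ _ b.2 }
      rintro _ ⟨y, hy, rfl⟩
      exact H τ ⟨y, hy, rfl⟩
    · intro H τ
      rintro _ ⟨y, hy, rfl⟩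
      exact H (τ.restrictScalars k) (fun x hx => τ.commutes ⟨x, hx⟩) ⟨y, hy, rfl⟩
  rw [hs, ← hn]
  constructor
  · rintro ⟨_, hG⟩
    exact ⟨hG.to_isSeparable, hG.to_normal⟩
  · rintro ⟨h1, h2⟩
    exact ⟨h, ⟨⟩⟩

lemma le_galoisClosureOver {k Ω : Type*} [Field k] [Field Ω] [Algebra k Ω]
    (B F : IntermediateField k Ω) : F ≤ galoisClosureOver B F := by
  refine le_trans ?_ (le_iSup (fun σ : {σ : Ω →ₐ[k] Ω // ∀ x ∈ B, σ x = x} => F.map σ.1)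
    ⟨AlgHom.id k Ω, fun _ _ => rfl⟩)
  intro x hx
  exact ⟨x, hx, rfl⟩

lemma map_le_galoisClosureOver {k Ω : Type*} [Field k] [Field Ω] [Algebra k Ω]
    (B F : IntermediateField k Ω) (σ : Ω →ₐ[k] Ω) (hσ : ∀ x ∈ B, σ x = x) :
    F.map σ ≤ galoisClosureOver B F :=
  le_iSup (fun σ : {σ : Ω →ₐ[k] Ω // ∀ x ∈ B, σ x = x} => F.map σ.1) ⟨σ, hσ⟩

lemma map_sepOver_le {k Ω : Type*} [Field k] [Field Ω] [Algebra k Ω]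
    (B F : IntermediateField k Ω) (hF : F ≤ sepOver B)
    (σ : Ω →ₐ[k] Ω) (hσ : ∀ x ∈ B, σ x = x) : F.map σ ≤ sepOver B := by
  let τ : Ω →ₐ[B] Ω := { σ.toRingHom with commutes' := fun b => hσ _ b.2 }
  rintro _ ⟨y, hy, rfl⟩
  have h1 : IsSeparable B y := hF hy
  exact h1.map τ τ.injective

lemma sepOver_eq {k Ω : Type*} [Field k] [Field Ω] [Algebra k Ω]
    (B F : IntermediateField k Ω) (hBF : B ≤ F) (hF : F ≤ sepOver B) :
    sepOver B = sepOver F := by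
  apply le_antisymm
  · exact (separableClosure_le_separableClosure_iff k Ω _).2
      (hBF.trans (le_restrictScalars_separableClosure F))
  · exact (separableClosure_le_separableClosure_iff k Ω _).2 hF

lemma altTower_mono {k Ω : Type*} [Field k] [Field Ω] [Algebra k Ω]
    (B₁ B₂ F₀ : IntermediateField k Ω) : Monotone (altTower B₁ B₂ F₀) :=
  monotone_nat_of_le_succ fun _ => le_galoisClosureOver _ _

lemma altTower_le {k Ω : Type*} [Field k] [Field Ω] [Algebra k Ω]
    (B₁ B₂ F₀ E : IntermediateField k Ω) (h0 : F₀ ≤ E)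
    (h1 : ∀ F ≤ E, ∀ σ : Ω →ₐ[k] Ω, (∀ x ∈ B₁, σ x = x) → F.map σ ≤ E)
    (h2 : ∀ F ≤ E, ∀ σ : Ω →ₐ[k] Ω, (∀ x ∈ B₂, σ x = x) → F.map σ ≤ E) (n : ℕ) :
    altTower B₁ B₂ F₀ n ≤ E := by
  induction n with
  | zero => exact h0
  | succ n ih =>
    refine iSup_le ?_
    rintro ⟨σ, hσ⟩
    split_ifs at hσ with hn
    · exact h1 _ ih σ hσ
    · exact h2 _ ih σ hσ

lemma altTower_map_le {k Ω : Type*} [Field k] [Field Ω] [Algebra k Ω]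
    (B₁ B₂ F₀ : IntermediateField k Ω) (σ : Ω →ₐ[k] Ω)
    (hσ : (∀ x ∈ B₁, σ x = x) ∨ (∀ x ∈ B₂, σ x = x)) :
    (⨆ n : ℕ, altTower B₁ B₂ F₀ (n + 1)).map σ ≤ ⨆ n : ℕ, altTower B₁ B₂ F₀ (n + 1) := by
  rw [IntermediateField.map_iSup]
  refine iSup_le fun n => ?_
  have key : ∃ m, n + 1 ≤ m ∧ ∀ x ∈ (if m % 2 = 0 then B₁ else B₂), σ x = x := by
    rcases hσ with hσ | hσ
    · refine ⟨2 * (n + 1), by omega, ?_⟩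
      rwa [if_pos (by omega)]
    · refine ⟨2 * (n + 1) + 1, by omega, ?_⟩
      rwa [if_neg (by omega)]
  obtain ⟨m, hm, hx⟩ := key
  refine le_trans (IntermediateField.map_mono σ (altTower_mono B₁ B₂ F₀ hm)) ?_
  exact le_trans (map_le_galoisClosureOver _ _ σ hx)
    (le_iSup (fun n => altTower B₁ B₂ F₀ (n + 1)) m)

lemma fieldRange_le_sepOver {k M Ω : Type*} [Field k] [Field M] [Algebra k M]
    [Field Ω] [Algebra k Ω] (L : IntermediateField k M) [Algebra.IsSeparable L M]
    (PQ : M →ₐ[k] Ω) : PQ.fieldRange ≤ sepOver (PQ.comp L.val).fieldRange := by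
  rintro _ ⟨m, rfl⟩
  rw [mem_sepOver]
  let P : L →+* Ω := (PQ.comp L.val).toRingHom
  letI : Algebra L Ω := P.toAlgebra
  letI : Algebra L (PQ.comp L.val).fieldRange :=
    ((PQ.comp L.val).rangeRestrict.toRingHom : L →+* (PQ.comp L.val).range).toAlgebra
  have : IsScalarTower L (PQ.comp L.val).fieldRange Ω :=
    IsScalarTower.of_algebraMap_eq fun _ => rfl
  let τ : M →ₐ[L] Ω := { PQ.toRingHom with commutes' := fun b => rfl }
  have h1 : IsSeparable L (τ m) :=
    (Algebra.IsSeparable.isSeparable L m).map τ τ.injective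
  exact h1.tower_top _

lemma isAlgebraic_fieldRange {k M Ω : Type*} [Field k] [Field M] [Algebra k M]
    [Field Ω] [Algebra k Ω] (htr : HasTrdegOne k M) (htrΩ : HasTrdegOne k Ω)
    (PQ : M →ₐ[k] Ω) (B : IntermediateField k Ω) (hB : B ≤ PQ.fieldRange)
    (hs : PQ.fieldRange ≤ sepOver B) : Algebra.IsAlgebraic B Ω := by
  obtain ⟨x, hx⟩ := htr
  obtain ⟨y, hy⟩ := htrΩ
  have hi : AlgebraicIndependent k (PQ ∘ fun _ : Unit => x) :=
    hx.1.map' PQ.injective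
  have hb := hi.isTranscendenceBasis_of_lift_trdeg_le_of_finite
    (le_of_eq hy.lift_cardinalMk_eq_trdeg.symm)
  have ha := hb.isAlgebraic_field
  have hle : IntermediateField.adjoin k (Set.range (PQ ∘ fun _ : Unit => x)) ≤ PQ.fieldRange := by
    rw [IntermediateField.adjoin_le_iff]
    rintro _ ⟨_, rfl⟩
    exact ⟨x, rfl⟩
  have hsep : Algebra.IsSeparable B (IntermediateField.extendScalars hB) := by
    rw [← le_separableClosure_iff]; exact hs
  have : Algebra.IsAlgebraic (IntermediateField.extendScalars hB) Ω := by
    constructor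
    intro z
    letI := (IntermediateField.inclusion hle).toRingHom.toAlgebra
    have : IsScalarTower (IntermediateField.adjoin k (Set.range (PQ ∘ fun _ : Unit => x)))
      PQ.fieldRange Ω := IsScalarTower.of_algebraMap_eq fun _ => rfl
    have := (ha.isAlgebraic z).tower_top PQ.fieldRange
    exact this
  exact Algebra.IsAlgebraic.trans B (IntermediateField.extendScalars hB) Ω


/-- Corollary `Intrinsic_min_galois_both`.
The union `E_∞` of the alternating tower of Galois closures is Galois over `P(L)` and
over `Q(K)`, and it is contained in every subfield `F` of `Ω` containing `PQ(M)` that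
is Galois over both `P(L)` and `Q(K)`; i.e. `E_∞` is the minimal such subfield. -/
theorem altTower_union_minimal_biGalois
    (k M : Type*) [Field k] [Field M] [Algebra k M]
    -- `M` is a finitely generated field extension of `k` of transcendence degree 1
    (hfg : (⊤ : IntermediateField k M).FG)
    (htr : HasTrdegOne k M)
    -- the two intermediate fields `L` and `K`, with `M/L` and `M/K` finite and separable
    (L K : IntermediateField k M)
    [FiniteDimensional L M] [FiniteDimensional K M]
    [Algebra.IsSeparable L M] [Algebra.IsSeparable K M]
    -- an algebraically closed extension `Ω` of `k` of transcendence degree 1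
    (Ω : Type*) [Field Ω] [Algebra k Ω] [IsAlgClosed Ω]
    (htrΩ : HasTrdegOne k Ω)
    -- a fixed `k`-algebra embedding `PQ : M → Ω`
    (PQ : M →ₐ[k] Ω) :
    IsGaloisOver (PQ.comp L.val).fieldRange
      (⨆ n : ℕ, altTower (PQ.comp K.val).fieldRange (PQ.comp L.val).fieldRange
        PQ.fieldRange (n + 1)) ∧
    IsGaloisOver (PQ.comp K.val).fieldRange
      (⨆ n : ℕ, altTower (PQ.comp K.val).fieldRange (PQ.comp L.val).fieldRange
        PQ.fieldRange (n + 1)) ∧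
    ∀ F : IntermediateField k Ω, PQ.fieldRange ≤ F →
      IsGaloisOver (PQ.comp L.val).fieldRange F →
      IsGaloisOver (PQ.comp K.val).fieldRange F →
      (⨆ n : ℕ, altTower (PQ.comp K.val).fieldRange (PQ.comp L.val).fieldRange
        PQ.fieldRange (n + 1)) ≤ F := by
  have hL : (PQ.comp L.val).fieldRange ≤ PQ.fieldRange := by
    rintro _ ⟨y, rfl⟩
    exact ⟨y, rfl⟩
  have hK : (PQ.comp K.val).fieldRange ≤ PQ.fieldRange := by
    rintro _ ⟨y, rfl⟩
    exact ⟨y, rfl⟩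
  have hsL := fieldRange_le_sepOver L PQ
  have hsK := fieldRange_le_sepOver K PQ
  have aL := isAlgebraic_fieldRange htr htrΩ PQ _ hL hsL
  have aK := isAlgebraic_fieldRange htr htrΩ PQ _ hK hsK
  have hLK : sepOver (PQ.comp L.val).fieldRange = sepOver (PQ.comp K.val).fieldRange :=
    (sepOver_eq _ _ hL hsL).trans (sepOver_eq _ _ hK hsK).symm
  have h0 : PQ.fieldRange ≤ ⨆ n : ℕ, altTower (PQ.comp K.val).fieldRange
      (PQ.comp L.val).fieldRange PQ.fieldRange (n + 1) :=
    le_trans (le_galoisClosureOver _ _) (le_iSup (fun n => altTower (PQ.comp K.val).fieldRange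
      (PQ.comp L.val).fieldRange PQ.fieldRange (n + 1)) 0)
  have hsep : (⨆ n : ℕ, altTower (PQ.comp K.val).fieldRange
      (PQ.comp L.val).fieldRange PQ.fieldRange (n + 1)) ≤
      sepOver (PQ.comp K.val).fieldRange := by
    refine iSup_le fun n => altTower_le _ _ _ _ hsK ?_ ?_ _
    · intro F hF σ hσ
      exact map_sepOver_le _ _ hF σ hσ
    · rw [← hLK]
      intro F hF σ hσ
      exact map_sepOver_le _ _ hF σ hσ
  refine ⟨?_, ?_, ?_⟩
  · rw [isGaloisOver_iff_aux _ _ (hL.trans h0)]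
    exact ⟨hLK ▸ hsep, fun σ hσ => altTower_map_le _ _ _ σ (Or.inr hσ)⟩
  · rw [isGaloisOver_iff_aux _ _ (hK.trans h0)]
    exact ⟨hsep, fun σ hσ => altTower_map_le _ _ _ σ (Or.inl hσ)⟩
  · intro F hF gL gK
    rw [isGaloisOver_iff_aux _ _ (hL.trans hF)] at gL
    rw [isGaloisOver_iff_aux _ _ (hK.trans hF)] at gK
    refine iSup_le fun n => altTower_le _ _ _ _ hF ?_ ?_ _
    · intro E hE σ hσ
      exact (IntermediateField.map_mono σ hE).trans (gK.2 σ hσ)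
    · intro E hE σ hσ
      exact (IntermediateField.map_mono σ hE).trans (gL.2 σ hσ)
end
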